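/- For every integer n >= 2, the word X^2 (A X)^n X is not universal: there exist a uniquely divisible group G and elements a, b in G such that the equation x^2 * (a x)^n * x = b has no solution x in G. -/

import Mathlib

/-- A group is *uniquely divisible* if every element has a unique `m`-th root
for each positive integer `m`. -/
def UniquelyDivisible (G : Type*) [Group G] : Prop :=
  ∀ (b : G) (m : ℕ), 0 < m → ∃! x : G, x ^ m = b

/-!
Consider a group of affine maps `z ↦ χ h * z + u` of the complex line, whose linear parts come from
a faithful character `χ` of `ℚ`. The equation determines the linear part of `x`, and `a` and `b`
can be chosen so that it is `t = χ 1` while `a * x` is a translation. The translation part of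
`x ^ 2 * (a * x) ^ n * x` is then a multiple of `t + t⁻¹ + n + 1`, so `b` is missed as soon as
`t + t⁻¹ = -(n + 1)` and `b` moves `0`. Such a `t` belongs to a faithful character exactly when
it is not a root of unity, and it is not one because roots of unity satisfy `‖t + t⁻¹‖ ≤ 2`.
-/

open Function Multiplicative SemidirectProduct

theorem UniquelyDivisible.eq_one_of_pow_eq_one {G : Type*} [Group G] (hG : UniquelyDivisible G)
    {x : G} {m : ℕ} (hm : 0 < m) (hx : x ^ m = 1) : x = 1 :=
  (hG 1 m hm).unique hx (one_pow m)

theorem uniquelyDivisible_multiplicative (M : Type*) [AddCommGroup M] [Module ℚ M] :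
    UniquelyDivisible (Multiplicative M) := by
  intro b m hm
  have hm' : (m : ℚ) ≠ 0 := Nat.cast_ne_zero.mpr hm.ne'
  refine ⟨ofAdd ((m : ℚ)⁻¹ • b.toAdd), toAdd.injective ?_, fun y hy => toAdd.injective ?_⟩
  · simp only [toAdd_pow, toAdd_ofAdd, ← Nat.cast_smul_eq_nsmul ℚ, smul_inv_smul₀ hm']
  · simp only [← hy, toAdd_pow, toAdd_ofAdd, ← Nat.cast_smul_eq_nsmul ℚ, inv_smul_smul₀ hm']

theorem geom_sum_ne_zero_of_pow_eq_one_imp {R : Type*} [Ring R] [CharZero R] {r : R}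
    {m : ℕ} (hm : m ≠ 0) (hr : r ^ m = 1 → r = 1) : ∑ i ∈ Finset.range m, r ^ i ≠ 0 := by
  intro hsum
  have hr1 : r = 1 := hr (sub_eq_zero.mp (by rw [← geom_sum_mul, hsum, zero_mul]))
  simp [hr1, hm] at hsum

section AffineExtension

variable {K H : Type*} [Field K] [Group H]

/-- The action of `H` on the additive group of `K` in which `h` multiplies by `χ h`; it is the
action defining `AffineExtension χ`. -/
def scalingAction (χ : H →* Kˣ) : H →* MulAut (Multiplicative K) :=
  (MulAutMultiplicative K).symm.toMonoidHom.comp (AddAut.mulLeft.comp χ)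

/-- The group of affine maps `z ↦ χ h * z + u` of the line over `K`, for a character `χ` of `H`.
It is encoded as a semidirect product, whose element `⟨ofAdd u, h⟩` stands for that map; distinct
elements give distinct maps only when `χ` is injective. -/
abbrev AffineExtension (χ : H →* Kˣ) : Type _ :=
  Multiplicative K ⋊[scalingAction χ] H

namespace AffineExtension

variable {χ : H →* Kˣ}

theorem ext_toAdd {x y : AffineExtension χ} (h_left : x.left.toAdd = y.left.toAdd)
    (h_right : x.right = y.right) : x = y :=
  SemidirectProduct.ext (toAdd.injective h_left) h_right

theorem toAdd_left_mul (x y : AffineExtension χ) :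
    (x * y).left.toAdd = x.left.toAdd + χ x.right * y.left.toAdd := rfl

theorem right_pow (x : AffineExtension χ) (m : ℕ) : (x ^ m).right = x.right ^ m :=
  map_pow rightHom x m

theorem right_zpow (x : AffineExtension χ) (m : ℤ) : (x ^ m).right = x.right ^ m :=
  map_zpow rightHom x m

theorem toAdd_left_pow (x : AffineExtension χ) (m : ℕ) :
    (x ^ m).left.toAdd = (∑ i ∈ Finset.range m, (χ x.right : K) ^ i) * x.left.toAdd := by
  induction m with
  | zero => simp
  | succ m ih =>
    rw [pow_succ, toAdd_left_mul, ih, right_pow, map_pow, Units.val_pow_eq_pow_val,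
      Finset.sum_range_succ, add_mul]

theorem uniquelyDivisible [CharZero K] (hH : UniquelyDivisible H) (hχ : Injective χ) :
    UniquelyDivisible (AffineExtension χ) := by
  intro b m hm
  have sum_ne_zero (h : H) : ∑ i ∈ Finset.range m, (χ h : K) ^ i ≠ 0 := by
    refine geom_sum_ne_zero_of_pow_eq_one_imp hm.ne' fun hpow => ?_
    have : h ^ m = 1 := hχ (by ext; simpa using hpow)
    simp [hH.eq_one_of_pow_eq_one hm this]
  obtain ⟨h, hh, h_unique⟩ := hH b.right m hm
  refine ⟨⟨ofAdd (b.left.toAdd / ∑ i ∈ Finset.range m, (χ h : K) ^ i), h⟩, ?_, ?_⟩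
  · exact ext_toAdd ((toAdd_left_pow _ _).trans (mul_div_cancel₀ _ (sum_ne_zero h)))
      ((right_pow _ _).trans hh)
  · rintro y rfl
    have hy_right : y.right = h := h_unique _ (right_pow _ _).symm
    refine ext_toAdd ((eq_div_iff (sum_ne_zero h)).mpr ?_) hy_right
    rw [toAdd_left_pow, hy_right, mul_comm]

theorem inr_inv_right_mul (x : AffineExtension χ) :
    inr x.right⁻¹ * x = inl (ofAdd (((χ x.right)⁻¹ : Kˣ) * x.left.toAdd)) := by
  apply ext_toAdd <;> simp [toAdd_left_mul, -mul_left]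

theorem toAdd_left_word (x : AffineExtension χ) (n : ℤ) :
    (x ^ 2 * (inr x.right⁻¹ * x) ^ n * x).left.toAdd =
      χ x.right * (χ x.right + (χ x.right : K)⁻¹ + (n + 1)) * x.left.toAdd := by
  have hχx : (χ x.right : K) ≠ 0 := (χ x.right).ne_zero
  rw [inr_inv_right_mul, ← map_zpow]
  simp only [toAdd_left_mul, toAdd_left_pow, mul_right, right_pow, right_inl, left_inl, mul_one,
    toAdd_zpow, toAdd_ofAdd, zsmul_eq_mul, map_pow, Units.val_pow_eq_pow_val,
    Units.val_inv_eq_inv_val, Finset.sum_range_succ, Finset.sum_range_zero]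
  field_simp
  ring

end AffineExtension

end AffineExtension

section Word

variable {K H : Type*} [Field K] [CommGroup H] [IsMulTorsionFree H] {χ : H →* Kˣ}

theorem AffineExtension.right_eq_of_word_eq {g : H} {n : ℤ} (hn : n + 3 ≠ 0)
    {x b : AffineExtension χ} (hb : b.right = g ^ 3) (hx : x ^ 2 * (inr g⁻¹ * x) ^ n * x = b) :
    x.right = g := by
  have h_right : x.right ^ 2 * (g⁻¹ * x.right) ^ n * x.right = g ^ 3 := by
    simpa only [mul_right, right_pow, right_zpow, right_inr, hb] using congrArg right hx
  have h_quot : (g⁻¹ * x.right) ^ (n + 3) = 1 := by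
    calc (g⁻¹ * x.right) ^ (n + 3)
        = (g ^ 3)⁻¹ * (x.right ^ 2 * (g⁻¹ * x.right) ^ n * x.right) := by
          rw [zpow_add, zpow_ofNat, mul_pow _ _ 3, inv_pow, pow_succ x.right 2]; ac_rfl
      _ = 1 := by rw [h_right, inv_mul_cancel]
  exact (inv_mul_eq_one.mp ((IsMulTorsionFree.zpow_eq_one_iff_left hn).mp h_quot)).symm

theorem AffineExtension.word_ne {g : H} {n : ℤ} (hn : n + 3 ≠ 0)
    (hg : (χ g : K) + (χ g : K)⁻¹ = -(n + 1)) {u : K} (hu : u ≠ 0) (x : AffineExtension χ) :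
    x ^ 2 * (inr g⁻¹ * x) ^ n * x ≠ ⟨ofAdd u, g ^ 3⟩ := by
  intro hx
  obtain rfl := right_eq_of_word_eq hn rfl hx
  refine hu ?_
  calc u = (x ^ 2 * (inr x.right⁻¹ * x) ^ n * x).left.toAdd := by rw [hx]; rfl
    _ = 0 := by rw [toAdd_left_word, hg, neg_add_cancel, mul_zero, zero_mul]

end Word

theorem exists_unit_add_inv_eq {K : Type*} [Field K] [IsAlgClosed K] [NeZero (2 : K)] (c : K) :
    ∃ t : Kˣ, (t : K) + (t : K)⁻¹ = c := by
  obtain ⟨t, ht⟩ := exists_quadratic_eq_zero (b := -c) (c := 1) one_ne_zero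
    (IsAlgClosed.exists_eq_mul_self _)
  have ht0 : t ≠ 0 := by rintro rfl; simp at ht
  refine ⟨Units.mk0 t ht0, ?_⟩
  rw [Units.val_mk0]
  field_simp
  linear_combination ht

theorem not_isOfFinOrder_of_two_lt_norm_add_inv {K : Type*} [NormedDivisionRing K] {t : K}
    (ht : 2 < ‖t + t⁻¹‖) : ¬ IsOfFinOrder t := by
  intro h
  have : ‖t + t⁻¹‖ ≤ 2 := by
    calc ‖t + t⁻¹‖ ≤ ‖t‖ + ‖t⁻¹‖ := norm_add_le _ _
      _ = 2 := by rw [norm_inv, h.norm_eq_one]; norm_num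
  exact this.not_gt ht

theorem injective_of_not_isOfFinOrder_apply_one {G : Type*} [Group G] {f : Multiplicative ℚ →* G}
    (hf : ¬ IsOfFinOrder (f (ofAdd 1))) : Injective f := by
  refine (injective_iff_map_eq_one f).mpr fun q hq => ?_
  have num_eq : ofAdd (1 : ℚ) ^ q.toAdd.num = q ^ q.toAdd.den :=
    toAdd.injective (by simp [mul_comm, Rat.mul_den_eq_num])
  have hnum : f (ofAdd 1) ^ q.toAdd.num = f (ofAdd 1) ^ (0 : ℤ) := by
    rw [← map_zpow, num_eq, map_pow, hq, one_pow, zpow_zero]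
  exact toAdd.injective (Rat.num_eq_zero.mp (injective_zpow_iff_not_isOfFinOrder.mpr hf hnum))

theorem exists_monoidHom_rat_apply_one_eq (t : ℂˣ) :
    ∃ χ : Multiplicative ℚ →* ℂˣ, χ (ofAdd 1) = t := by
  let mulLog : ℚ →+ ℂ := (LinearMap.toSpanSingleton ℚ ℂ (Complex.log t)).toAddMonoidHom
  refine ⟨(Complex.expMonoidHom.comp mulLog.toMultiplicative).toHomUnits, Units.ext ?_⟩
  simp [mulLog, Complex.expMonoidHom, Complex.exp_log t.ne_zero]

theorem stmt10_general (n : ℤ) (hn : 2 < |n + 1|) :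
    ∃ (G : Type) (_ : Group G), UniquelyDivisible G ∧
      ∃ a b : G, ¬ ∃ x : G, x ^ 2 * (a * x) ^ n * x = b := by
  obtain ⟨t, ht⟩ := exists_unit_add_inv_eq (-(n + 1) : ℂ)
  have ht_order : ¬ IsOfFinOrder t := by
    refine mt Units.isOfFinOrder_val.mpr (not_isOfFinOrder_of_two_lt_norm_add_inv ?_)
    rw [ht, norm_neg]
    exact_mod_cast hn
  obtain ⟨χ, rfl⟩ := exists_monoidHom_rat_apply_one_eq t
  have hn3 : n + 3 ≠ 0 := by grind
  exact ⟨AffineExtension χ, inferInstance,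
    AffineExtension.uniquelyDivisible (uniquelyDivisible_multiplicative ℚ)
      (injective_of_not_isOfFinOrder_apply_one ht_order),
    inr (ofAdd 1)⁻¹, ⟨ofAdd 1, ofAdd 1 ^ 3⟩,
    fun ⟨x, hx⟩ => AffineExtension.word_ne hn3 ht one_ne_zero x hx⟩

/-- For every integer `n ≥ 2`, the word `X² (A X)ⁿ X` is not universal:
there are a uniquely divisible group `G` and `a b : G` such that
`x² (a x)ⁿ x = b` has no solution `x : G`. -/
theorem stmt10 (n : ℕ) (hn : 2 ≤ n) :
    ∃ (G : Type) (_ : Group G), UniquelyDivisible G ∧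
      ∃ a b : G, ¬ ∃ x : G, x ^ 2 * (a * x) ^ n * x = b := by
  simpa only [zpow_natCast] using stmt10_general n (by grind)
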